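/- (Proposition 2) Let 0 < p < 1 and let α, β be real with α ≥ β > 0 and α² + β² = 1. Then F*(ρ(χ(α), Λ_p)) > F(ρ(χ(α), Λ_p)) — i.e., trace-preserving local operations can strictly enhance the fidelity of ρ(χ(α), Λ_p) — if and only if p > (√5 − 1)/2 and α² < p²/(1−p+p²). Equivalently, enhancement is possible exactly when p > (√5 − 1)/2 and the concurrence 2αβ of |χ(α)⟩ exceeds the concurrence of |χ(√(g(p)))⟩ where g(p) = p²/(1−p+p²). -/

import Mathlib

open Matrix Complex
open scoped Kronecker ComplexOrder

/-- Index type for two qubits: the product basis of ℂ² ⊗ ℂ². -/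
abbrev Q2 := Fin 2 × Fin 2

/-- Kraus operator `M₀` of the amplitude damping channel. -/
noncomputable def M0 (p : ℝ) : Matrix (Fin 2) (Fin 2) ℂ :=
  !![1, 0; 0, (Real.sqrt (1 - p) : ℂ)]

/-- Kraus operator `M₁` of the amplitude damping channel. -/
noncomputable def M1 (p : ℝ) : Matrix (Fin 2) (Fin 2) ℂ :=
  !![0, (Real.sqrt p : ℂ); 0, 0]

/-- Outer product `|ψ⟩⟨ψ|` of a two-qubit vector. -/
noncomputable def outer (ψ : Q2 → ℂ) : Matrix Q2 Q2 ℂ :=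
  Matrix.of fun i j => ψ i * star (ψ j)

/-- The state `ρ(χ, Λ_p)` obtained by applying the amplitude damping channel
with parameter `p` to the second qubit: `Σᵢ (I ⊗ Mᵢ) ρ (I ⊗ Mᵢ)†`. -/
noncomputable def ampDamp (p : ℝ) (ρ : Matrix Q2 Q2 ℂ) : Matrix Q2 Q2 ℂ :=
  ((1 : Matrix (Fin 2) (Fin 2) ℂ) ⊗ₖ M0 p) * ρ * ((1 : Matrix (Fin 2) (Fin 2) ℂ) ⊗ₖ M0 p)ᴴ +
  ((1 : Matrix (Fin 2) (Fin 2) ℂ) ⊗ₖ M1 p) * ρ * ((1 : Matrix (Fin 2) (Fin 2) ℂ) ⊗ₖ M1 p)ᴴ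

/-- The pure state `|χ⟩ = a|00⟩ + b|11⟩`. -/
noncomputable def ketChi (a b : ℝ) : Q2 → ℂ :=
  fun ij => if ij = ((0 : Fin 2), (0 : Fin 2)) then (a : ℂ)
    else if ij = ((1 : Fin 2), (1 : Fin 2)) then (b : ℂ) else 0

/-- The maximally entangled state `|Φ⁺⟩ = (|00⟩ + |11⟩)/√2`. -/
noncomputable def phiPlus : Q2 → ℂ := ketChi (Real.sqrt 2)⁻¹ (Real.sqrt 2)⁻¹

/-- The optimal transmitted state `|χ₀⟩ = (1/√(2−p))|00⟩ + √((1−p)/(2−p))|11⟩`. -/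
noncomputable def ketChi0 (p : ℝ) : Q2 → ℂ :=
  ketChi (Real.sqrt (1 / (2 - p))) (Real.sqrt ((1 - p) / (2 - p)))

/-- Reduced density matrix on the first qubit (trace out the second qubit). -/
noncomputable def trSecond (ρ : Matrix Q2 Q2 ℂ) : Matrix (Fin 2) (Fin 2) ℂ :=
  Matrix.of fun i k => ∑ j : Fin 2, ρ (i, j) (k, j)

/-- Reduced density matrix on the second qubit (trace out the first qubit). -/
noncomputable def trFirst (ρ : Matrix Q2 Q2 ℂ) : Matrix (Fin 2) (Fin 2) ℂ :=
  Matrix.of fun j l => ∑ i : Fin 2, ρ (i, j) (i, l)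

/-- A unit vector `ψ ∈ ℂ²⊗ℂ²` is maximally entangled if both reduced density
matrices of `|ψ⟩⟨ψ|` equal `I/2`. -/
def MaxEnt (ψ : Q2 → ℂ) : Prop :=
  (∑ ij : Q2, Complex.normSq (ψ ij)) = 1 ∧
  trSecond (outer ψ) = (1 / 2 : ℂ) • (1 : Matrix (Fin 2) (Fin 2) ℂ) ∧
  trFirst (outer ψ) = (1 / 2 : ℂ) • (1 : Matrix (Fin 2) (Fin 2) ℂ)

/-- The real expectation value `⟨ψ|ρ|ψ⟩`. -/
noncomputable def expectation (ψ : Q2 → ℂ) (ρ : Matrix Q2 Q2 ℂ) : ℝ :=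
  (∑ i : Q2, ∑ j : Q2, star (ψ i) * ρ i j * ψ j).re

/-- Fidelity (fully entangled fraction): `F(ρ) = sup_Ψ ⟨Ψ|ρ|Ψ⟩` over maximally
entangled unit vectors `Ψ`. -/
noncomputable def Fid (ρ : Matrix Q2 Q2 ℂ) : ℝ :=
  sSup {x : ℝ | ∃ ψ : Q2 → ℂ, MaxEnt ψ ∧ x = expectation ψ ρ}

/-- Partial transposition on the second qubit: `(ρ^Γ)_{(i,j),(k,l)} = ρ_{(i,l),(k,j)}`. -/
def ptrans (ρ : Matrix Q2 Q2 ℂ) : Matrix Q2 Q2 ℂ :=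
  Matrix.of fun ij kl => ρ (ij.1, kl.2) (kl.1, ij.2)

/-- The Verstraete–Verschelde maximum achievable fidelity under trace-preserving LOCC,
as the value of the semidefinite program
`F*(ρ) = sup { 1/2 − Tr(X ρ^Γ) : X Hermitian, 0 ≤ X ≤ I, −I/2 ≤ X^Γ ≤ I/2 }`. -/
noncomputable def FStar (ρ : Matrix Q2 Q2 ℂ) : ℝ :=
  sSup {x : ℝ | ∃ X : Matrix Q2 Q2 ℂ,
    X.IsHermitian ∧ X.PosSemidef ∧ ((1 : Matrix Q2 Q2 ℂ) - X).PosSemidef ∧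
    (ptrans X + (1 / 2 : ℂ) • (1 : Matrix Q2 Q2 ℂ)).PosSemidef ∧
    ((1 / 2 : ℂ) • (1 : Matrix Q2 Q2 ℂ) - ptrans X).PosSemidef ∧
    x = 1 / 2 - ((X * ptrans ρ).trace).re}

/-- The Pauli matrix `σ_y`. -/
noncomputable def sigY : Matrix (Fin 2) (Fin 2) ℂ := !![0, -Complex.I; Complex.I, 0]

/-- The matrix `ρ (σ_y⊗σ_y) ρ̄ (σ_y⊗σ_y)` whose eigenvalues define the concurrence. -/
noncomputable def Rmat (ρ : Matrix Q2 Q2 ℂ) : Matrix Q2 Q2 ℂ :=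
  ρ * (sigY ⊗ₖ sigY) * ρ.map (starRingEnd ℂ) * (sigY ⊗ₖ sigY)

/-- `c` is the concurrence of `ρ`: `c = max(0, λ₁ − λ₂ − λ₃ − λ₄)` where
`λ₁ ≥ λ₂ ≥ λ₃ ≥ λ₄ ≥ 0` are the square roots of the eigenvalues (with multiplicity)
of `ρ (σ_y⊗σ_y) ρ̄ (σ_y⊗σ_y)`. -/
def IsConcurrence (ρ : Matrix Q2 Q2 ℂ) (c : ℝ) : Prop :=
  ∃ lam : Fin 4 → ℝ,
    (∀ i j : Fin 4, i ≤ j → lam j ≤ lam i) ∧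
    (∀ i : Fin 4, 0 ≤ lam i) ∧
    (Rmat ρ).charpoly = ∏ i : Fin 4, (Polynomial.X - Polynomial.C ((lam i : ℂ) ^ 2)) ∧
    c = max 0 (lam 0 - lam 1 - lam 2 - lam 3)

/-- `μ` is an eigenvalue of the matrix `A`. -/
def IsEigenvalue (A : Matrix Q2 Q2 ℂ) (μ : ℂ) : Prop :=
  ∃ v : Q2 → ℂ, v ≠ 0 ∧ A *ᵥ v = μ • v

/-!
Damping `α|00⟩ + β|11⟩` leaves `ρ = |χ⟩⟨χ| + d |10⟩⟨10|` with `|χ⟩ = a|00⟩ + b|11⟩`. Its fidelity is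
attained at `|Φ⁺⟩` and equals `(a + b)² / 2`. In the semidefinite program only the coherence
`s = -2 Re X₀₁,₁₀ ∈ [-1, 1]` matters: positivity of `X` and `X^Γ ≤ I/2` force `X₁₀,₁₀ ≥ s² / 2`, so
the objective is at most `1/2 + a b s - d s² / 2`, with equality for `X = |v⟩⟨v| / 2`,
`|v⟩ = |01⟩ - s|10⟩`, when `s ≥ 0`. The maximum is at `s = 1`, where it agrees with the fidelity,
unless `a b < d`; then the interior maximizer `s = a b / d` strictly improves on it.
-/

section PosSemidef

variable {n 𝕜 : Type*} [RCLike 𝕜]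

lemma re_apply_self_nonneg_of_posSemidef {A : Matrix n n 𝕜} (hA : A.PosSemidef) (i : n) :
    0 ≤ RCLike.re (A i i) :=
  (RCLike.nonneg_iff.1 hA.diag_nonneg).1

lemma norm_apply_sq_le_of_posSemidef {A : Matrix n n 𝕜} (hA : A.PosSemidef) (i j : n) :
    ‖A i j‖ ^ 2 ≤ RCLike.re (A i i) * RCLike.re (A j j) := by
  have hdet := (hA.submatrix ![i, j]).det_nonneg
  have hminor : A i i * A j j - A i j * A j i =
      ((RCLike.re (A i i) * RCLike.re (A j j) - ‖A i j‖ ^ 2 : ℝ) : 𝕜) := by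
    rw [← hA.isHermitian.apply j i, ← hA.isHermitian.coe_re_apply_self i,
      ← hA.isHermitian.coe_re_apply_self j]
    simp [RCLike.mul_conj]
  rw [Matrix.det_fin_two] at hdet
  simp only [Matrix.submatrix_apply, Matrix.cons_val_zero, Matrix.cons_val_one, hminor,
    RCLike.ofReal_nonneg] at hdet
  linarith

end PosSemidef

lemma outer_eq_vecMulVec (ψ : Q2 → ℂ) : outer ψ = vecMulVec ψ (star ψ) := rfl

lemma posSemidef_outer (ψ : Q2 → ℂ) : (outer ψ).PosSemidef :=
  posSemidef_vecMulVec_self_star ψ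

lemma mul_outer_mul_conjTranspose (A : Matrix Q2 Q2 ℂ) (ψ : Q2 → ℂ) :
    A * outer ψ * Aᴴ = outer (A *ᵥ ψ) := by
  rw [outer_eq_vecMulVec, outer_eq_vecMulVec, mul_vecMulVec, vecMulVec_mul, star_mulVec]

lemma outer_single (i : Q2) (z : ℂ) : outer (Pi.single i z) = Matrix.single i i (z * star z) := by
  ext j k
  rw [outer_eq_vecMulVec, Pi.star_single, vecMulVec_apply, Matrix.single_apply, Pi.single_apply,
    Pi.single_apply, ite_zero_mul_ite_zero]
  simp only [eq_comm]

lemma posSemidef_smul_outer_add_diagonal {s : ℝ} (hs : 0 ≤ s) (ψ : Q2 → ℂ) {d : Q2 → ℝ}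
    (hd : ∀ i, 0 ≤ d i) : ((s : ℂ) • outer ψ + diagonal fun i => (d i : ℂ)).PosSemidef :=
  ((posSemidef_outer ψ).smul (by exact_mod_cast hs)).add
    (.diagonal fun i => zero_le_real.2 (hd i))

/-- The state `|χ⟩⟨χ| + d |10⟩⟨10|`, `|χ⟩ = a|00⟩ + b|11⟩`, to which amplitude damping of the second
qubit takes the Schmidt form `α|00⟩ + β|11⟩`. -/
noncomputable def dampedState (a b d : ℝ) : Matrix Q2 Q2 ℂ :=
  outer (ketChi a b) + Matrix.single (1, 0) (1, 0) (d : ℂ)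

lemma kronecker_M0_mulVec_ketChi (p α β : ℝ) :
    ((1 : Matrix (Fin 2) (Fin 2) ℂ) ⊗ₖ M0 p) *ᵥ ketChi α β = ketChi α (β * Real.sqrt (1 - p)) := by
  ext ⟨i, j⟩
  fin_cases i <;> fin_cases j <;>
    simp [M0, ketChi, mulVec, dotProduct, Fintype.sum_prod_type, mul_comm]

lemma kronecker_M1_mulVec_ketChi (p α β : ℝ) :
    ((1 : Matrix (Fin 2) (Fin 2) ℂ) ⊗ₖ M1 p) *ᵥ ketChi α β =
      Pi.single (1, 0) ((β * Real.sqrt p : ℝ) : ℂ) := by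
  ext ⟨i, j⟩
  fin_cases i <;> fin_cases j <;>
    simp [M1, ketChi, mulVec, dotProduct, Fintype.sum_prod_type, mul_comm]

lemma ampDamp_outer_ketChi {p : ℝ} (hp : 0 ≤ p) (α β : ℝ) :
    ampDamp p (outer (ketChi α β)) = dampedState α (β * Real.sqrt (1 - p)) (β ^ 2 * p) := by
  have hweight : β * Real.sqrt p * (β * Real.sqrt p) = β ^ 2 * p := by
    rw [← pow_two, mul_pow, Real.sq_sqrt hp]
  rw [ampDamp, mul_outer_mul_conjTranspose, mul_outer_mul_conjTranspose,
    kronecker_M0_mulVec_ketChi, kronecker_M1_mulVec_ketChi, outer_single, dampedState,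
    Complex.star_def, conj_ofReal, ← ofReal_mul, hweight]

lemma expectation_dampedState (ψ : Q2 → ℂ) (a b d : ℝ) :
    expectation ψ (dampedState a b d) =
      ‖a * ψ (0, 0) + b * ψ (1, 1)‖ ^ 2 + d * ‖ψ (1, 0)‖ ^ 2 := by
  simp [expectation, dampedState, outer, ketChi, Matrix.single, Fintype.sum_prod_type,
    ← normSq_eq_norm_sq, normSq_apply]
  ring

lemma MaxEnt.norm_sq_add_norm_sq {ψ : Q2 → ℂ} (h : MaxEnt ψ) :
    ‖ψ (0, 0)‖ ^ 2 + ‖ψ (1, 0)‖ ^ 2 = 1 / 2 := by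
  have hcol := congrArg Complex.re (congrFun₂ h.2.2 0 0)
  simpa [trFirst, outer, ← normSq_eq_norm_sq, normSq_apply] using hcol

lemma MaxEnt.norm_apply_one_one {ψ : Q2 → ℂ} (h : MaxEnt ψ) : ‖ψ (1, 1)‖ = ‖ψ (0, 0)‖ := by
  have hrow : ‖ψ (1, 0)‖ ^ 2 + ‖ψ (1, 1)‖ ^ 2 = 1 / 2 := by
    have := congrArg Complex.re (congrFun₂ h.2.1 1 1)
    simpa [trSecond, outer, ← normSq_eq_norm_sq, normSq_apply] using this
  rw [← sq_eq_sq₀ (norm_nonneg _) (norm_nonneg _)]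
  linarith [h.norm_sq_add_norm_sq]

lemma maxEnt_phiPlus : MaxEnt phiPlus := by
  have hhalf : ((Real.sqrt 2 : ℂ))⁻¹ * ((Real.sqrt 2 : ℂ))⁻¹ = (2 : ℂ)⁻¹ := by
    rw [← mul_inv, ← ofReal_mul, Real.mul_self_sqrt zero_le_two, ofReal_ofNat]
  refine ⟨?_, ?_, ?_⟩
  · norm_num [phiPlus, ketChi, Fintype.sum_prod_type]
  · ext i j
    fin_cases i <;> fin_cases j <;> simp [trSecond, outer, phiPlus, ketChi, hhalf]
  · ext i j
    fin_cases i <;> fin_cases j <;> simp [trFirst, outer, phiPlus, ketChi, hhalf]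

lemma expectation_phiPlus_dampedState (a b d : ℝ) :
    expectation phiPlus (dampedState a b d) = (a + b) ^ 2 / 2 := by
  simp [expectation_dampedState, phiPlus, ketChi, ← add_mul, mul_pow, ← ofReal_add, div_eq_mul_inv]

lemma expectation_dampedState_le {ψ : Q2 → ℂ} (hψ : MaxEnt ψ) {a b d : ℝ} (ha : 0 ≤ a) (hb : 0 ≤ b)
    (hd : d ≤ (a + b) ^ 2) : expectation ψ (dampedState a b d) ≤ (a + b) ^ 2 / 2 := by
  have htriangle : ‖a * ψ (0, 0) + b * ψ (1, 1)‖ ≤ (a + b) * ‖ψ (0, 0)‖ := by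
    refine (norm_add_le _ _).trans_eq ?_
    rw [norm_mul, norm_mul, hψ.norm_apply_one_one, Complex.norm_of_nonneg ha,
      Complex.norm_of_nonneg hb, add_mul]
  calc expectation ψ (dampedState a b d)
      = ‖a * ψ (0, 0) + b * ψ (1, 1)‖ ^ 2 + d * ‖ψ (1, 0)‖ ^ 2 := expectation_dampedState ψ a b d
    _ ≤ ((a + b) * ‖ψ (0, 0)‖) ^ 2 + (a + b) ^ 2 * ‖ψ (1, 0)‖ ^ 2 := by gcongr
    _ = (a + b) ^ 2 * (‖ψ (0, 0)‖ ^ 2 + ‖ψ (1, 0)‖ ^ 2) := by ring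
    _ = (a + b) ^ 2 / 2 := by rw [hψ.norm_sq_add_norm_sq]; ring

theorem fid_dampedState {a b d : ℝ} (ha : 0 ≤ a) (hb : 0 ≤ b) (hd : d ≤ (a + b) ^ 2) :
    Fid (dampedState a b d) = (a + b) ^ 2 / 2 := by
  refine IsGreatest.csSup_eq
    ⟨⟨phiPlus, maxEnt_phiPlus, (expectation_phiPlus_dampedState a b d).symm⟩, ?_⟩
  rintro _ ⟨ψ, hψ, rfl⟩
  exact expectation_dampedState_le hψ ha hb hd

/-- Feasibility of `X` in the Verstraete–Verschelde semidefinite program; that `X` is Hermitian is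
part of positive semidefiniteness. -/
structure IsFeasible (X : Matrix Q2 Q2 ℂ) : Prop where
  posSemidef : X.PosSemidef
  one_sub_posSemidef : (1 - X).PosSemidef
  ptrans_add_half_posSemidef : (ptrans X + (1 / 2 : ℂ) • (1 : Matrix Q2 Q2 ℂ)).PosSemidef
  half_sub_ptrans_posSemidef : ((1 / 2 : ℂ) • (1 : Matrix Q2 Q2 ℂ) - ptrans X).PosSemidef

lemma IsFeasible.fStar_eq {ρ X : Matrix Q2 Q2 ℂ} (hX : IsFeasible X)
    (hmin : ∀ Y, IsFeasible Y → (X * ptrans ρ).trace.re ≤ (Y * ptrans ρ).trace.re) :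
    FStar ρ = 1 / 2 - (X * ptrans ρ).trace.re := by
  refine IsGreatest.csSup_eq ⟨⟨X, hX.posSemidef.isHermitian, hX.posSemidef,
    hX.one_sub_posSemidef, hX.ptrans_add_half_posSemidef, hX.half_sub_ptrans_posSemidef, rfl⟩, ?_⟩
  rintro _ ⟨Y, -, hY, hY_le, hY_ge_half, hY_le_half, rfl⟩
  exact sub_le_sub_left (hmin Y ⟨hY, hY_le, hY_ge_half, hY_le_half⟩) _

lemma IsFeasible.re_apply_self_le_half {X : Matrix Q2 Q2 ℂ} (hX : IsFeasible X) (i : Q2) :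
    (X i i).re ≤ 1 / 2 := by
  have h := (Complex.le_def.1 (hX.half_sub_ptrans_posSemidef.diag_nonneg (i := i))).1
  simpa [ptrans] using h

lemma IsFeasible.two_mul_re_apply_sq_le {X : Matrix Q2 Q2 ℂ} (hX : IsFeasible X) (i j : Q2) :
    2 * (X i j).re ^ 2 ≤ (X j j).re := by
  have hminor : (X i j).re ^ 2 ≤ (X i i).re * (X j j).re :=
    (sq_le_sq.2 ((abs_re_le_norm _).trans (le_abs_self _))).trans
      (norm_apply_sq_le_of_posSemidef hX.posSemidef i j)
  have hdiag : 0 ≤ (X j j).re := re_apply_self_nonneg_of_posSemidef hX.posSemidef j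
  linarith [mul_le_mul_of_nonneg_right (hX.re_apply_self_le_half i) hdiag]

lemma re_trace_mul_ptrans_dampedState {X : Matrix Q2 Q2 ℂ} (hX : X.IsHermitian) (a b d : ℝ) :
    (X * ptrans (dampedState a b d)).trace.re = a ^ 2 * (X (0, 0) (0, 0)).re +
      b ^ 2 * (X (1, 1) (1, 1)).re + d * (X (1, 0) (1, 0)).re +
      2 * (a * b) * (X (0, 1) (1, 0)).re := by
  have hre : (X (1, 0) (0, 1)).re = (X (0, 1) (1, 0)).re := by
    simpa using congrArg Complex.re (hX.apply (0, 1) (1, 0))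
  simp [Matrix.trace, Matrix.mul_apply, ptrans, dampedState, outer, ketChi, Matrix.single,
    Fintype.sum_prod_type, hre]
  ring

lemma IsFeasible.exists_le_re_trace_mul_ptrans_dampedState {X : Matrix Q2 Q2 ℂ} (hX : IsFeasible X)
    (a b : ℝ) {d : ℝ} (hd : 0 ≤ d) :
    ∃ s ∈ Set.Icc (-1 : ℝ) 1,
      d * s ^ 2 / 2 - a * b * s ≤ (X * ptrans (dampedState a b d)).trace.re := by
  have hcoh := hX.two_mul_re_apply_sq_le (0, 1) (1, 0)
  have hhalf := hX.re_apply_self_le_half (1, 0)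
  have hdiag (i : Q2) : 0 ≤ (X i i).re := re_apply_self_nonneg_of_posSemidef hX.posSemidef i
  refine ⟨-2 * (X (0, 1) (1, 0)).re, ?_, ?_⟩
  · exact ⟨by nlinarith, by nlinarith⟩
  · rw [re_trace_mul_ptrans_dampedState hX.posSemidef.isHermitian]
    linarith [mul_nonneg (sq_nonneg a) (hdiag (0, 0)),
      mul_nonneg (sq_nonneg b) (hdiag (1, 1)), mul_le_mul_of_nonneg_left hcoh hd]

/-- The unnormalized vector `|01⟩ - t|10⟩`, a singlet after a local filter `diag(1, t)`. -/
noncomputable def filteredSinglet (t : ℝ) : Q2 → ℂ :=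
  fun i => !![0, 1; -(t : ℂ), 0] i.1 i.2

/-- The candidate optimizer `|v⟩⟨v| / 2` of the semidefinite program, for `v` the filtered
singlet `|01⟩ - t|10⟩`. -/
noncomputable def filterWitness (t : ℝ) : Matrix Q2 Q2 ℂ :=
  ((1 / 2 : ℝ) : ℂ) • outer (filteredSinglet t)

lemma posSemidef_filterWitness (t : ℝ) : (filterWitness t).PosSemidef :=
  (posSemidef_outer _).smul (zero_le_real.2 one_half_pos.le)

lemma one_sub_filterWitness (t : ℝ) :
    1 - filterWitness t = ((1 / 2 : ℝ) : ℂ) • outer (filteredSinglet (-t)) +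
      diagonal fun i => ((!![1, 0; 1 - t ^ 2, 1] i.1 i.2 : ℝ) : ℂ) := by
  ext ⟨i, j⟩ ⟨k, l⟩
  fin_cases i <;> fin_cases j <;> fin_cases k <;> fin_cases l <;>
    simp [filterWitness, outer, filteredSinglet] <;> ring

lemma ptrans_filterWitness_add_half (t : ℝ) :
    ptrans (filterWitness t) + (1 / 2 : ℂ) • (1 : Matrix Q2 Q2 ℂ) =
      ((t / 2 : ℝ) : ℂ) • outer (ketChi 1 (-1)) +
        diagonal fun i => ((!![(1 - t) / 2, 1; (1 + t ^ 2) / 2, (1 - t) / 2] i.1 i.2 : ℝ) : ℂ) := by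
  ext ⟨i, j⟩ ⟨k, l⟩
  fin_cases i <;> fin_cases j <;> fin_cases k <;> fin_cases l <;>
    simp [filterWitness, ptrans, outer, filteredSinglet, ketChi] <;> ring

lemma half_sub_ptrans_filterWitness (t : ℝ) :
    (1 / 2 : ℂ) • (1 : Matrix Q2 Q2 ℂ) - ptrans (filterWitness t) =
      ((t / 2 : ℝ) : ℂ) • outer (ketChi 1 1) +
        diagonal fun i => ((!![(1 - t) / 2, 0; (1 - t ^ 2) / 2, (1 - t) / 2] i.1 i.2 : ℝ) : ℂ) := by
  ext ⟨i, j⟩ ⟨k, l⟩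
  fin_cases i <;> fin_cases j <;> fin_cases k <;> fin_cases l <;>
    simp [filterWitness, ptrans, outer, filteredSinglet, ketChi] <;> ring

lemma isFeasible_filterWitness {t : ℝ} (ht : t ∈ Set.Icc (0 : ℝ) 1) :
    IsFeasible (filterWitness t) := by
  obtain ⟨ht₀, ht₁⟩ := ht
  have hsq : t ^ 2 ≤ 1 := pow_le_one₀ ht₀ ht₁
  have hsq₀ := sq_nonneg t
  refine ⟨posSemidef_filterWitness t, ?_, ?_, ?_⟩
  · rw [one_sub_filterWitness]
    refine posSemidef_smul_outer_add_diagonal (by norm_num) _ fun ⟨i, j⟩ => ?_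
    fin_cases i <;> fin_cases j <;> simp [abs_of_nonneg ht₀, ht₁]
  · rw [ptrans_filterWitness_add_half]
    refine posSemidef_smul_outer_add_diagonal (by linarith) _ fun ⟨i, j⟩ => ?_
    fin_cases i <;> fin_cases j <;> simp <;> linarith
  · rw [half_sub_ptrans_filterWitness]
    refine posSemidef_smul_outer_add_diagonal (by linarith) _ fun ⟨i, j⟩ => ?_
    fin_cases i <;> fin_cases j <;> simp <;> linarith

lemma re_trace_filterWitness_mul_ptrans_dampedState (t a b d : ℝ) :
    (filterWitness t * ptrans (dampedState a b d)).trace.re = d * t ^ 2 / 2 - a * b * t := by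
  rw [re_trace_mul_ptrans_dampedState (posSemidef_filterWitness t).isHermitian]
  simp [filterWitness, outer, filteredSinglet]
  ring

theorem fStar_dampedState {a b d t : ℝ} (hd : 0 ≤ d) (ht : t ∈ Set.Icc (0 : ℝ) 1)
    (hmax : IsMaxOn (fun s => a * b * s - d * s ^ 2 / 2) (Set.Icc (-1) 1) t) :
    FStar (dampedState a b d) = 1 / 2 + (a * b * t - d * t ^ 2 / 2) := by
  rw [(isFeasible_filterWitness ht).fStar_eq, re_trace_filterWitness_mul_ptrans_dampedState]
  · ring
  · intro Y hY
    obtain ⟨s, hs, hle⟩ := hY.exists_le_re_trace_mul_ptrans_dampedState a b hd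
    have hst : a * b * s - d * s ^ 2 / 2 ≤ a * b * t - d * t ^ 2 / 2 := hmax hs
    rw [re_trace_filterWitness_mul_ptrans_dampedState]
    linarith

theorem fStar_dampedState_of_le_mul {a b d : ℝ} (hd : 0 ≤ d) (hdab : d ≤ a * b) :
    FStar (dampedState a b d) = 1 / 2 + a * b - d / 2 := by
  rw [fStar_dampedState hd (Set.right_mem_Icc.2 zero_le_one)]
  · ring
  · rintro s ⟨-, hs⟩
    have hslope : 0 ≤ (1 - s) * (a * b - d * (1 + s) / 2) :=
      mul_nonneg (by linarith) (by nlinarith)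
    change a * b * s - d * s ^ 2 / 2 ≤ a * b * 1 - d * 1 ^ 2 / 2
    linarith

theorem fStar_dampedState_of_mul_le {a b d : ℝ} (hab : 0 ≤ a * b) (hd : 0 < d) (hle : a * b ≤ d) :
    FStar (dampedState a b d) = 1 / 2 + (a * b) ^ 2 / (2 * d) := by
  rw [fStar_dampedState (t := a * b / d) hd.le ⟨by positivity, (div_le_one hd).2 hle⟩]
  · field_simp
    ring
  · intro s _
    have hsquare : a * b * (a * b / d) - d * (a * b / d) ^ 2 / 2 - (a * b * s - d * s ^ 2 / 2) =
        d / 2 * (s - a * b / d) ^ 2 := by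
      field_simp
      ring
    have hnonneg : 0 ≤ d / 2 * (s - a * b / d) ^ 2 := by positivity
    exact sub_nonneg.1 (hnonneg.trans_eq hsquare.symm)

theorem fid_lt_fStar_dampedState_iff {a b d : ℝ} (ha : 0 ≤ a) (hb : 0 ≤ b) (hd : 0 ≤ d)
    (hle : d ≤ (a + b) ^ 2) (htrace : a ^ 2 + b ^ 2 + d = 1) :
    Fid (dampedState a b d) < FStar (dampedState a b d) ↔ a * b < d := by
  have hab : 0 ≤ a * b := mul_nonneg ha hb
  have hfid : Fid (dampedState a b d) = 1 / 2 + a * b - d / 2 := by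
    rw [fid_dampedState ha hb hle]
    linarith
  rw [hfid]
  rcases le_or_gt d (a * b) with h | h
  · simp [fStar_dampedState_of_le_mul hd h, h]
  · have hd' : 0 < d := hab.trans_lt h
    have hgain : 1 / 2 + (a * b) ^ 2 / (2 * d) - (1 / 2 + a * b - d / 2) =
        (d - a * b) ^ 2 / (2 * d) := by
      field_simp
      ring
    have hpos : 0 < (d - a * b) ^ 2 / (2 * d) := by
      have := sub_pos.2 h
      positivity
    rw [fStar_dampedState_of_mul_le hab hd' h.le]
    exact iff_of_true (by linarith) h

/-- The paper's `g(p) = p² / (1 - p + p²)`, the bound on `α²` below which trace-preserving local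
operations help. -/
noncomputable def enhancementThreshold (p : ℝ) : ℝ := p ^ 2 / (1 - p + p ^ 2)

lemma one_sub_add_sq_pos (p : ℝ) : 0 < 1 - p + p ^ 2 := by
  nlinarith [sq_nonneg (p - 1 / 2)]

lemma half_lt_enhancementThreshold_iff {p : ℝ} (hp : 0 ≤ p) :
    1 / 2 < enhancementThreshold p ↔ (Real.sqrt 5 - 1) / 2 < p := by
  have hsqrt : Real.sqrt 5 < 2 * p + 1 ↔ 5 < (2 * p + 1) ^ 2 := Real.sqrt_lt' (by linarith)
  rw [enhancementThreshold, lt_div_iff₀ (one_sub_add_sq_pos p), div_lt_iff₀ two_pos,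
    sub_lt_iff_lt_add, mul_comm p, hsqrt]
  constructor <;> intro h <;> linarith

lemma mul_sqrt_one_sub_lt_iff {p α β : ℝ} (hp : p ∈ Set.Icc (0 : ℝ) 1) (hα : 0 ≤ α) (hβ : 0 < β)
    (hnorm : α ^ 2 + β ^ 2 = 1) :
    α * (β * Real.sqrt (1 - p)) < β ^ 2 * p ↔ α ^ 2 < enhancementThreshold p := by
  have hcancel : α * (β * Real.sqrt (1 - p)) < β ^ 2 * p ↔ α * Real.sqrt (1 - p) < β * p := by
    rw [mul_left_comm, pow_two, mul_assoc, mul_lt_mul_iff_right₀ hβ]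
  rw [hcancel, enhancementThreshold, lt_div_iff₀ (one_sub_add_sq_pos p),
    ← sq_lt_sq₀ (mul_nonneg hα (Real.sqrt_nonneg _)) (mul_nonneg hβ.le hp.1), mul_pow, mul_pow,
    Real.sq_sqrt (sub_nonneg.2 hp.2), ← sub_pos, ← sub_pos (b := α ^ 2 * _),
    show β ^ 2 = 1 - α ^ 2 by linarith]
  ring_nf

theorem fid_lt_fStar_ampDamp_iff {p α β : ℝ} (hp : p ∈ Set.Icc (0 : ℝ) 1) (hβα : β ≤ α)
    (hβ : 0 < β) (hnorm : α ^ 2 + β ^ 2 = 1) :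
    Fid (ampDamp p (outer (ketChi α β))) < FStar (ampDamp p (outer (ketChi α β))) ↔
      α ^ 2 < enhancementThreshold p := by
  have hα : 0 ≤ α := hβ.le.trans hβα
  have hb : 0 ≤ β * Real.sqrt (1 - p) := by positivity
  have hweight : β ^ 2 * p ≤ (α + β * Real.sqrt (1 - p)) ^ 2 :=
    calc β ^ 2 * p ≤ β ^ 2 := mul_le_of_le_one_right (sq_nonneg β) hp.2
      _ ≤ (α + β * Real.sqrt (1 - p)) ^ 2 := by gcongr; linarith
  have htrace : α ^ 2 + (β * Real.sqrt (1 - p)) ^ 2 + β ^ 2 * p = 1 := by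
    rw [mul_pow, Real.sq_sqrt (sub_nonneg.2 hp.2)]
    linarith
  rw [ampDamp_outer_ketChi hp.1, fid_lt_fStar_dampedState_iff hα hb
    (mul_nonneg (sq_nonneg β) hp.1) hweight htrace, mul_sqrt_one_sub_lt_iff hp hα hβ hnorm]

lemma strictAntiOn_mul_one_sub : StrictAntiOn (fun x : ℝ => x * (1 - x)) (Set.Ici (1 / 2)) := by
  intro x (hx : 1 / 2 ≤ x) y _ hxy
  change y * (1 - y) < x * (1 - x)
  nlinarith

lemma concurrence_lt_iff {g α β : ℝ} (hg : 1 / 2 ≤ g) (hα : 0 < α) (hβ : 0 < β)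
    (hhalf : 1 / 2 ≤ α ^ 2) (hnorm : α ^ 2 + β ^ 2 = 1) :
    2 * Real.sqrt g * Real.sqrt (1 - g) < 2 * α * β ↔ α ^ 2 < g := by
  rw [mul_assoc, mul_assoc, mul_lt_mul_iff_right₀ two_pos, ← Real.sqrt_mul (by linarith),
    Real.sqrt_lt' (mul_pos hα hβ), mul_pow, show β ^ 2 = 1 - α ^ 2 by linarith]
  exact strictAntiOn_mul_one_sub.lt_iff_gt hg hhalf

/-- Proposition 2: For `0 < p < 1`, `α ≥ β > 0`, `α² + β² = 1`,
trace-preserving local operations strictly enhance the fidelity of `ρ(χ(α), Λ_p)`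
if and only if `p > (√5 − 1)/2` and `α² < p²/(1−p+p²) = g(p)`; equivalently, iff
`p > (√5 − 1)/2` and the concurrence `2αβ` of `|χ(α)⟩` exceeds the concurrence of
`|χ(√(g(p)))⟩`. -/
theorem enhancement_iff (p α β : ℝ) (hp0 : 0 < p) (hp1 : p < 1)
    (hba : β ≤ α) (hb : 0 < β) (hnorm : α ^ 2 + β ^ 2 = 1) :
    (Fid (ampDamp p (outer (ketChi α β))) < FStar (ampDamp p (outer (ketChi α β))) ↔
      ((Real.sqrt 5 - 1) / 2 < p ∧ α ^ 2 < p ^ 2 / (1 - p + p ^ 2))) ∧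
    (Fid (ampDamp p (outer (ketChi α β))) < FStar (ampDamp p (outer (ketChi α β))) ↔
      ((Real.sqrt 5 - 1) / 2 < p ∧
        2 * Real.sqrt (p ^ 2 / (1 - p + p ^ 2)) *
          Real.sqrt (1 - p ^ 2 / (1 - p + p ^ 2)) < 2 * α * β)) := by
  have henh := fid_lt_fStar_ampDamp_iff ⟨hp0.le, hp1.le⟩ hba hb hnorm
  have hgolden := half_lt_enhancementThreshold_iff hp0.le
  have hhalf : 1 / 2 ≤ α ^ 2 := by nlinarith
  have hfirst : Fid (ampDamp p (outer (ketChi α β))) < FStar (ampDamp p (outer (ketChi α β))) ↔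
      (Real.sqrt 5 - 1) / 2 < p ∧ α ^ 2 < enhancementThreshold p := by
    rw [henh, ← hgolden]
    exact ⟨fun h => ⟨hhalf.trans_lt h, h⟩, And.right⟩
  exact ⟨hfirst, hfirst.trans (and_congr_right fun hp =>
    (concurrence_lt_iff (hgolden.2 hp).le (hb.trans_le hba) hb hhalf hnorm).symm)⟩
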